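/- There exists a polynomial Q(t) with nonnegative integer coefficients such that (1 + t^{ℓ−1}) · Σ_{k≥0} m_k t^k − (t^{ℓ−1} + t^ℓ) · Σ_{k≥0} v_k t^k = Σ_{k≥0} b^φ_k t^k + (1 + t) · Q(t) as polynomials (all sums are finite since C is bounded). -/

import Mathlib

open LinearMap Module

noncomputable section

namespace ConeMorse

variable (A : ℤ → Type) [∀ i, AddCommGroup (A i)] [∀ i, Module ℝ (A i)]

/-- Transport along an equality of indices. -/
def lcast {m k : ℤ} (h : m = k) : A m →ₗ[ℝ] A k where
  toFun x := h ▸ x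
  map_add' x y := by subst h; rfl
  map_smul' c x := by subst h; rfl

variable (d : ∀ i, A i →ₗ[ℝ] A (i + 1))

/-- Cocycles in degree `i`. -/
def cocycles (i : ℤ) : Submodule ℝ (A i) := ker (d i)

/-- Coboundaries in degree `i`: the image of `d : A^{i-1} → A^i`. -/
def cobound (i : ℤ) : Submodule ℝ (A i) :=
  range ((lcast A (show i - 1 + 1 = i by ring)).comp (d (i - 1)))

/-- Cohomology in degree `i`: cocycles modulo coboundaries. -/
abbrev Hcoh (i : ℤ) :=
  cocycles A d i ⧸ Submodule.comap (cocycles A d i).subtype (cobound A d i)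

section OneComplex

variable (ℓ : ℤ) (φ : ∀ i, A i →ₗ[ℝ] A (i + ℓ))

/-- The cone differential `∂_C (a, b) = (∂ a + φ b, (−1)^{ℓ−1} ∂ b)` on
`Cone^i(φ) = A^i ⊕ A^{i−ℓ+1}`. -/
def coneD (i : ℤ) : (A i × A (i - ℓ + 1)) →ₗ[ℝ] (A (i + 1) × A (i + 1 - ℓ + 1)) :=
  LinearMap.prod
    ((d i).comp (LinearMap.fst ℝ (A i) (A (i - ℓ + 1))) +
      (lcast A (show i - ℓ + 1 + ℓ = i + 1 by ring)).comp
        ((φ (i - ℓ + 1)).comp (LinearMap.snd ℝ (A i) (A (i - ℓ + 1)))))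
    (((-1 : ℝ) ^ (ℓ - 1)) •
      ((lcast A (show i - ℓ + 1 + 1 = i + 1 - ℓ + 1 by ring)).comp
        ((d (i - ℓ + 1)).comp (LinearMap.snd ℝ (A i) (A (i - ℓ + 1))))))

variable [∀ i, FiniteDimensional ℝ (A i)]

/-- `m_k`: the dimension of the cochain group in degree `k`. -/
def mnum (k : ℤ) : ℕ := finrank ℝ (A k)

/-- `b_k`: the dimension of the cohomology in degree `k`. -/
def bnum (k : ℤ) : ℕ := finrank ℝ (Hcoh A d k)

/-- `v_k`: the rank of `φ : A^k → A^{k+ℓ}`. -/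
def vnum (k : ℤ) : ℕ := finrank ℝ (range (φ k))

/-- `r_k`: the rank of the induced map `[φ] : H^k → H^{k+ℓ}`, computed as the dimension of
`φ(Z^k)/(φ(Z^k) ∩ B^{k+ℓ})`. -/
def rnum (k : ℤ) : ℕ :=
  finrank ℝ ((Submodule.map (φ k) (cocycles A d k)) ⧸
    Submodule.comap (Submodule.map (φ k) (cocycles A d k)).subtype (cobound A d (k + ℓ)))

/-- `b^φ_k`: the dimension of the cone cohomology in degree `k`. -/
def bphi (k : ℤ) : ℕ :=
  finrank ℝ (Hcoh (fun i => A i × A (i - ℓ + 1)) (coneD A d ℓ φ) k)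

end OneComplex

end ConeMorse

open ConeMorse


namespace ConeMorse

section Aux

variable (A : ℤ → Type) [∀ i, AddCommGroup (A i)] [∀ i, Module ℝ (A i)]

lemma lcast_inj {m k : ℤ} (h : m = k) : Function.Injective (lcast A h) := by
  subst h; exact fun x y hxy => hxy

lemma lcast_lcast {m k l : ℤ} (h : m = k) (h' : k = l) (x : A m) :
    lcast A h' (lcast A h x) = lcast A (h.trans h') x := by
  subst h; subst h'; rfl

lemma lcast_self {m : ℤ} (h : m = m) (x : A m) : lcast A h x = x := rfl

lemma d_lcast (d : ∀ i, A i →ₗ[ℝ] A (i + 1)) {m k : ℤ} (h : m = k) (x : A m) :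
    d k (lcast A h x) = lcast A (by rw [h]) (d m x) := by
  subst h; rfl

lemma phi_lcast (ℓ : ℤ) (φ : ∀ i, A i →ₗ[ℝ] A (i + ℓ)) {m k : ℤ} (h : m = k) (x : A m) :
    φ k (lcast A h x) = lcast A (by rw [h]) (φ m x) := by
  subst h; rfl

lemma finrank_Hcoh [∀ i, FiniteDimensional ℝ (A i)] (d : ∀ i, A i →ₗ[ℝ] A (i + 1))
    (hd : ∀ i, (d (i + 1)).comp (d i) = 0) (i : ℤ) :
    finrank ℝ (Hcoh A d i) + finrank ℝ (range (d i)) + finrank ℝ (range (d (i - 1)))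
      = finrank ℝ (A i) := by
  have hle : cobound A d i ≤ cocycles A d i := by
    rintro _ ⟨x, rfl⟩
    simp only [cocycles, LinearMap.mem_ker, LinearMap.comp_apply]
    rw [d_lcast]
    have := LinearMap.congr_fun (hd (i - 1)) x
    simp only [LinearMap.comp_apply, LinearMap.zero_apply] at this
    rw [this, map_zero]
  have h1 := Submodule.finrank_quotient_add_finrank
    (Submodule.comap (cocycles A d i).subtype (cobound A d i))
  have h2 := LinearEquiv.finrank_eq (Submodule.comapSubtypeEquivOfLe hle)
  have h3 : finrank ℝ (cobound A d i) = finrank ℝ (range (d (i - 1))) := by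
    unfold cobound
    rw [LinearMap.range_comp]
    exact (Submodule.equivMapOfInjective _ (lcast_inj A _) _).finrank_eq.symm
  have h4 := LinearMap.finrank_range_add_finrank_ker (d i)
  have h5 : finrank ℝ (cocycles A d i) = finrank ℝ (ker (d i)) := rfl
  unfold Hcoh
  omega

lemma coneD_sq (ℓ : ℤ) (d : ∀ i, A i →ₗ[ℝ] A (i + 1))
    (hd : ∀ i, (d (i + 1)).comp (d i) = 0)
    (φ : ∀ i, A i →ₗ[ℝ] A (i + ℓ))
    (hφ : ∀ i, (d (i + ℓ)).comp (φ i) =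
      ((-1 : ℝ) ^ ℓ) • (lcast A (show i + 1 + ℓ = i + ℓ + 1 by ring)).comp
        ((φ (i + 1)).comp (d i))) (i : ℤ) :
    (coneD A d ℓ φ (i + 1)).comp (coneD A d ℓ φ i) = 0 := by
  have hd' : ∀ i x, d (i + 1) (d i x) = 0 := fun i x => LinearMap.congr_fun (hd i) x
  have hφ' : ∀ i x, d (i + ℓ) (φ i x) = ((-1 : ℝ) ^ ℓ) •
      lcast A (show i + 1 + ℓ = i + ℓ + 1 by ring) (φ (i + 1) (d i x)) :=
    fun i x => LinearMap.congr_fun (hφ i) x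
  have hs : (-1 : ℝ) ^ ℓ = - (-1 : ℝ) ^ (ℓ - 1) := by
    rw [zpow_sub_one₀ (by norm_num)]; norm_num
  apply LinearMap.ext
  rintro ⟨a, b⟩
  apply Prod.ext
  · simp [coneD, d_lcast, phi_lcast, hd', hφ', lcast_lcast, hs]
  · simp [coneD, d_lcast, phi_lcast, hd', hφ', lcast_lcast]

lemma v_le_R [∀ i, FiniteDimensional ℝ (A i)] (ℓ : ℤ) (d : ∀ i, A i →ₗ[ℝ] A (i + 1))
    (φ : ∀ i, A i →ₗ[ℝ] A (i + ℓ)) (i : ℤ) :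
    vnum A ℓ φ (i - ℓ + 1) ≤ finrank ℝ (range (coneD A d ℓ φ i)) := by
  have e : i - ℓ + 1 + ℓ = i + 1 := by ring
  have h1 : finrank ℝ (Submodule.map (lcast A e) (range (φ (i - ℓ + 1))))
      = finrank ℝ (range (φ (i - ℓ + 1))) :=
    (Submodule.equivMapOfInjective _ (lcast_inj A _) _).finrank_eq.symm
  unfold vnum
  rw [← h1]
  refine le_trans (Submodule.finrank_mono ?_)
    (Submodule.finrank_map_le (LinearMap.fst ℝ (A (i + 1)) (A (i + 1 - ℓ + 1))) _)
  rintro _ ⟨_, ⟨x, rfl⟩, rfl⟩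
  exact ⟨_, ⟨(0, x), rfl⟩, by simp [coneD]⟩

end Aux

open Polynomial in
lemma coeff_aux (f : ℤ → ℤ) (M a : ℕ) (h0 : ∀ i, i < 0 → f i = 0)
    (h1 : ∀ i, (M : ℤ) ≤ i → f i = 0) (j : ℕ) :
    (X ^ a * ∑ k ∈ Finset.range M, (C (f k) : Polynomial ℤ) * X ^ k).coeff j
      = f (j - a) := by
  rw [coeff_X_pow_mul']
  split_ifs with h
  · rw [finsetSum_coeff]
    simp only [coeff_C_mul, coeff_X_pow, mul_ite, mul_one, mul_zero]
    rw [Finset.sum_ite_eq]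
    split_ifs with h'
    · congr 1; omega
    · symm; apply h1; simp at h'; omega
  · symm; apply h0; omega

end ConeMorse

open Polynomial in
/-- there exists a polynomial `Q(t)` with nonnegative integer coefficients
such that
`(1 + t^{ℓ−1}) · Σ_k m_k t^k − (t^{ℓ−1} + t^ℓ) · Σ_k v_k t^k = Σ_k b^φ_k t^k + (1 + t) · Q(t)`.
Since `C^k = 0` outside `0 ≤ k ≤ n`, all the quantities vanish for `k ≥ n.toNat + ℓ.toNat + 1`,
so the (a priori infinite) sums are faithfully expressed by sums up to that bound. -/
theorem cone_morse_polynomial_inequality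
    (n ℓ : ℤ) (hn : 0 ≤ n) (hℓ : 1 ≤ ℓ)
    (C : ℤ → Type) [∀ i, AddCommGroup (C i)] [∀ i, Module ℝ (C i)]
    [∀ i, FiniteDimensional ℝ (C i)]
    (hC : ∀ i, i < 0 ∨ n < i → Subsingleton (C i))
    (d : ∀ i, C i →ₗ[ℝ] C (i + 1))
    (hd : ∀ i, (d (i + 1)).comp (d i) = 0)
    (φ : ∀ i, C i →ₗ[ℝ] C (i + ℓ))
    (hφ : ∀ i, (d (i + ℓ)).comp (φ i) =
      ((-1 : ℝ) ^ ℓ) • (lcast C (show i + 1 + ℓ = i + ℓ + 1 by ring)).comp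
        ((φ (i + 1)).comp (d i))) :
    ∃ Q : Polynomial ℤ, (∀ i, 0 ≤ Q.coeff i) ∧
      (1 + X ^ (ℓ - 1).toNat) *
          (∑ k ∈ Finset.range (n.toNat + ℓ.toNat + 1), (mnum C (k : ℤ) : Polynomial ℤ) * X ^ k) -
        (X ^ (ℓ - 1).toNat + X ^ ℓ.toNat) *
          (∑ k ∈ Finset.range (n.toNat + ℓ.toNat + 1),
            (vnum C ℓ φ (k : ℤ) : Polynomial ℤ) * X ^ k) =
      (∑ k ∈ Finset.range (n.toNat + ℓ.toNat + 1),
          (bphi C d ℓ φ (k : ℤ) : Polynomial ℤ) * X ^ k) +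
        (1 + X) * Q := by
  set M := n.toNat + ℓ.toNat + 1 with hM
  let R : ℤ → ℕ := fun i => finrank ℝ (range (coneD C d ℓ φ i))
  have hm : ∀ i, i < 0 ∨ n < i → mnum C i = 0 := fun i hi => by
    have := hC i hi
    exact finrank_zero_of_subsingleton
  have hv : ∀ i, i < 0 ∨ n < i → vnum C ℓ φ i = 0 := fun i hi => by
    have h1 := LinearMap.finrank_range_le (φ i)
    have h2 := hm i hi
    unfold mnum at h2
    unfold vnum
    omega
  have hb : ∀ i, bphi C d ℓ φ i + R i + R (i - 1) = mnum C i + mnum C (i - ℓ + 1) := fun i => by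
    have h := finrank_Hcoh (fun i => C i × C (i - ℓ + 1)) (coneD C d ℓ φ)
      (coneD_sq C ℓ d hd φ hφ) i
    rw [Module.finrank_prod] at h
    exact h
  have hR : ∀ i, i < 0 ∨ n + ℓ ≤ i → R i = 0 := fun i hi => by
    have h1 := hb i
    rw [hm i (by omega), hm (i - ℓ + 1) (by omega)] at h1
    omega
  have hB : ∀ i, i < 0 ∨ n + ℓ < i → bphi C d ℓ φ i = 0 := fun i hi => by
    have h1 := hb i
    rw [hm i (by omega), hm (i - ℓ + 1) (by omega)] at h1
    omega
  have hMz : (M : ℤ) = n + ℓ + 1 := by omega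
  let q : ℤ → ℤ := fun i => (R i : ℤ) - vnum C ℓ φ (i - ℓ + 1)
  have hq0 : ∀ i, 0 ≤ q i := fun i => by
    have := v_le_R C ℓ d φ i
    simp only [q, R]
    omega
  have hq : ∀ i, i < 0 ∨ n + ℓ ≤ i → q i = 0 := fun i hi => by
    simp only [q]
    rw [hR i hi, hv (i - ℓ + 1) (by omega)]
    simp
  have cq := fun a => coeff_aux q M a (fun i hi => hq i (by omega)) (fun i hi => hq i (by omega))
  have cm := fun a => coeff_aux (fun i => (mnum C i : ℤ)) M a
    (fun i hi => by simp [hm i (by omega)]) (fun i hi => by simp [hm i (by omega)])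
  have cv := fun a => coeff_aux (fun i => (vnum C ℓ φ i : ℤ)) M a
    (fun i hi => by simp [hv i (by omega)]) (fun i hi => by simp [hv i (by omega)])
  have cb := fun a => coeff_aux (fun i => (bphi C d ℓ φ i : ℤ)) M a
    (fun i hi => by simp [hB i (by omega)]) (fun i hi => by simp [hB i (by omega)])
  simp only [map_natCast] at cm cv cb
  refine ⟨∑ k ∈ Finset.range M, Polynomial.C (q k) * X ^ k, fun i => ?_, ?_⟩
  · have := cq 0 i
    rw [pow_zero, one_mul] at this
    rw [this]; exact hq0 _
  · ext j
    have e1 : ((1 : Polynomial ℤ) + X) = X ^ 0 + X ^ 1 := by simp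
    have e2 : ((1 : Polynomial ℤ) + X ^ (ℓ - 1).toNat) = X ^ 0 + X ^ (ℓ - 1).toNat := by simp
    have e3 := cb 0 j
    rw [pow_zero, one_mul] at e3
    rw [e1, e2, add_mul, add_mul, add_mul, coeff_sub, coeff_add, coeff_add, coeff_add, coeff_add,
      e3, cm, cm, cv, cv, cq, cq]
    have a1 : (j : ℤ) - ((ℓ - 1).toNat : ℕ) = j - ℓ + 1 := by omega
    have a2 : (j : ℤ) - (ℓ.toNat : ℕ) = j - ℓ := by omega
    have a3 : (j : ℤ) - 1 - ℓ + 1 = j - ℓ := by omega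
    have h := hb j
    simp only [a1, a2, a3, q, Nat.cast_zero, Nat.cast_one, sub_zero]
    omega
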